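/- Let G_1, …, G_r and H be finite simple graphs, φ : V(H) → ⊔_{d=1}^r V(G_d) a function, and u_h ∈ ℂ^{π(φ(h))} unit vectors (h ∈ V(H)) such that for all distinct non-adjacent h, h' ∈ V(H), either ¬(φ(h) ≃ φ(h')) or ⟨u_h, u_{h'}⟩ = 0. Then ξ̄_f(H) ≤ ∑_{d=1}^r d·ξ̄_f(G_d), where ξ̄_f denotes the projective rank of the complement. -/

import Mathlib

open scoped Kronecker
open Matrix

namespace NCG
/-- For vertices of a disjoint family of graphs: `g ≃ g'` iff they lie in the same member
graph and are adjacent or equal there. -/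
def SimRel {r : ℕ} {V : Fin r → Type} (G : ∀ d, SimpleGraph (V d)) :
    (Σ d, V d) → (Σ d, V d) → Prop :=
  fun p q => ∃ e : p.1 = q.1,
    (G q.1).Adj (cast (congrArg V e) p.2) q.2 ∨ cast (congrArg V e) p.2 = q.2

/-- The projective rank of a graph. -/
noncomputable def projRank {V : Type} [Fintype V] [DecidableEq V] (G : SimpleGraph V) : ℝ :=
  sInf {t : ℝ | ∃ (a b : ℕ) (P : V → Matrix (Fin a) (Fin a) ℂ), 0 < b ∧
    (∀ g, (P g)ᴴ = P g) ∧ (∀ g, P g * P g = P g) ∧ (∀ g, (P g).rank = b) ∧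
    (∀ g g', G.Adj g g' → P g * P g' = 0) ∧ t = (a : ℝ) / (b : ℝ)}

lemma rank_cast_eq_trace {ι : Type} [Fintype ι] [DecidableEq ι] (P : Matrix ι ι ℂ)
    (h : P * P = P) : (P.rank : ℂ) = P.trace := by
  have h1 : IsIdempotentElem (Matrix.toLin' P) := by
    show _ * _ = _
    rw [Module.End.mul_eq_comp, ← Matrix.toLin'_mul, h]
  have h2 := LinearMap.IsIdempotentElem.isProj_range _ h1
  have h3 := h2.trace
  rw [Matrix.trace_toLin'_eq] at h3
  rw [h3]
  rfl

lemma projRank_le {V : Type} [Fintype V] [DecidableEq V] (G : SimpleGraph V)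
    {ι : Type} [Fintype ι] [DecidableEq ι] (b : ℕ) (hb : 0 < b) (P : V → Matrix ι ι ℂ)
    (h1 : ∀ g, (P g)ᴴ = P g) (h2 : ∀ g, P g * P g = P g) (h3 : ∀ g, (P g).trace = b)
    (h4 : ∀ g g', G.Adj g g' → P g * P g' = 0) :
    projRank G ≤ (Fintype.card ι : ℝ) / b := by
  apply csInf_le
  · refine ⟨0, ?_⟩
    rintro t ⟨a, b, P, -, -, -, -, -, rfl⟩
    positivity
  · let e := Fintype.equivFin ι
    refine ⟨Fintype.card ι, b, fun g => Matrix.reindex e e (P g), hb, ?_, ?_, ?_, ?_, rfl⟩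
    · intro g
      simp only [Matrix.reindex_apply, Matrix.conjTranspose_submatrix, h1]
    · intro g
      simp only [Matrix.reindex_apply, Matrix.submatrix_mul_equiv, h2]
    · intro g
      rw [Matrix.rank_reindex]
      have := rank_cast_eq_trace (P g) (h2 g)
      rw [h3] at this
      exact_mod_cast this
    · intro g g' hg
      simp only [Matrix.reindex_apply, Matrix.submatrix_mul_equiv, h4 g g' hg]
      rfl

lemma exists_rep {V : Type} [Fintype V] [DecidableEq V] (G : SimpleGraph V) (x : ℝ)
    (hx : projRank G < x) : ∃ (a b : ℕ) (P : V → Matrix (Fin a) (Fin a) ℂ), 0 < b ∧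
    (∀ g, (P g)ᴴ = P g) ∧ (∀ g, P g * P g = P g) ∧ (∀ g, (P g).trace = b) ∧
    (∀ g g', G.Adj g g' → P g * P g' = 0) ∧ (a : ℝ) / (b : ℝ) < x := by
  have hne : {t : ℝ | ∃ (a b : ℕ) (P : V → Matrix (Fin a) (Fin a) ℂ), 0 < b ∧
    (∀ g, (P g)ᴴ = P g) ∧ (∀ g, P g * P g = P g) ∧ (∀ g, (P g).rank = b) ∧
    (∀ g g', G.Adj g g' → P g * P g' = 0) ∧ t = (a : ℝ) / (b : ℝ)}.Nonempty := by
    let e := Fintype.equivFin V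
    have key : ∀ g g' : V, (Matrix.single (e g) (e g) (1 : ℂ)) *
        Matrix.single (e g') (e g') (1 : ℂ) =
        if g = g' then Matrix.single (e g) (e g) (1 : ℂ) else 0 := by
      intro g g'
      split_ifs with h
      · subst h; simp
      · exact Matrix.single_mul_single_of_ne _ _ _ _ (fun h' => h (e.injective h')) _
    refine ⟨_, Fintype.card V, 1, fun g => Matrix.single (e g) (e g) 1, one_pos, ?_, ?_, ?_, ?_, rfl⟩
    · intro g; simp [Matrix.conjTranspose_single]
    · intro g; simp
    · intro g
      have := rank_cast_eq_trace (Matrix.single (e g) (e g) (1 : ℂ)) (by simp)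
      rw [Matrix.trace_single_eq_same] at this
      exact_mod_cast this
    · intro g g' h
      rw [key, if_neg h.ne]
  obtain ⟨t, ⟨a, b, P, hb, h1, h2, h3, h4, rfl⟩, ht⟩ := exists_lt_of_csInf_lt hne hx
  refine ⟨a, b, P, hb, h1, h2, fun g => ?_, h4, ht⟩
  rw [← rank_cast_eq_trace _ (h2 g), h3]

section blk
variable {r : ℕ} {V : Fin r → Type} (a c : Fin r → ℕ)
  (P : ∀ d, V d → Matrix (Fin (a d)) (Fin (a d)) ℂ)

/-- The block attached to a vertex and a vector. -/
noncomputable def blk (p : Σ d, V d) (u : Fin (p.1.1 + 1) → ℂ) :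
    ∀ d : Fin r, Matrix ((Fin (d.1 + 1) × Fin (a d)) × Fin (c d))
      ((Fin (d.1 + 1) × Fin (a d)) × Fin (c d)) ℂ :=
  Pi.single p.1 ((vecMulVec u (star u) ⊗ₖ P p.1 p.2) ⊗ₖ (1 : Matrix (Fin (c p.1)) (Fin (c p.1)) ℂ))

lemma blk_star (h1 : ∀ d g, (P d g)ᴴ = P d g) (p : Σ d, V d) (u : Fin (p.1.1 + 1) → ℂ) :
    (blockDiagonal' (blk a c P p u))ᴴ = blockDiagonal' (blk a c P p u) := by
  rw [blockDiagonal'_conjTranspose]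
  congr 1
  funext d
  by_cases h : d = p.1
  · subst h
    simp [blk, conjTranspose_kronecker, h1, conjTranspose_vecMulVec]
  · simp [blk, h]

lemma blk_mul (p : Σ d, V d) (u v : Fin (p.1.1 + 1) → ℂ) (g : V p.1) (d : Fin r) :
    blk a c P p u d * blk a c P ⟨p.1, g⟩ v d = 
      Pi.single (M := fun d : Fin r => Matrix ((Fin (d.1 + 1) × Fin (a d)) × Fin (c d))
      ((Fin (d.1 + 1) × Fin (a d)) × Fin (c d)) ℂ) p.1 ((((star u ⬝ᵥ v) • vecMulVec u (star v)) ⊗ₖ (P p.1 p.2 * P p.1 g)) ⊗ₖ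
        (1 : Matrix (Fin (c p.1)) (Fin (c p.1)) ℂ)) d := by
  by_cases h : d = p.1
  · subst h
    simp only [blk, Pi.single_eq_same]
    rw [← mul_kronecker_mul, ← mul_kronecker_mul, one_mul, vecMulVec_mul_vecMulVec, vecMulVec_smul]
  · simp [blk, h]

lemma blk_idem (h2 : ∀ d g, P d g * P d g = P d g) (p : Σ d, V d) (u : Fin (p.1.1 + 1) → ℂ)
    (hu : star u ⬝ᵥ u = 1) :
    blockDiagonal' (blk a c P p u) * blockDiagonal' (blk a c P p u) =
      blockDiagonal' (blk a c P p u) := by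
  rw [← blockDiagonal'_mul]
  congr 1
  funext d
  have := blk_mul a c P p u u p.2 d
  rw [hu, h2, one_smul] at this
  exact this

lemma blk_trace (b : Fin r → ℕ) (h3 : ∀ d g, (P d g).trace = b d) (p : Σ d, V d)
    (u : Fin (p.1.1 + 1) → ℂ) (hu : star u ⬝ᵥ u = 1) :
    (blockDiagonal' (blk a c P p u)).trace = b p.1 * c p.1 := by
  rw [trace_blockDiagonal', Finset.sum_eq_single p.1]
  · simp only [blk, Pi.single_eq_same]
    rw [trace_kronecker, trace_kronecker, trace_vecMulVec, dotProduct_comm, hu, h3]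
    simp
  · intro d _ h
    simp [blk, h]
  · simp

lemma blk_orth (G : ∀ d, SimpleGraph (V d))
    (h4 : ∀ d g g', (G d)ᶜ.Adj g g' → P d g * P d g' = 0) (p q : Σ d, V d)
    (u : Fin (p.1.1 + 1) → ℂ) (v : Fin (q.1.1 + 1) → ℂ)
    (h : ¬ SimRel G p q ∨ ∀ e : p.1 = q.1, star u ⬝ᵥ
            (fun i => v (Fin.cast (congrArg (fun d : Fin r => d.1 + 1) e) i)) = 0) :
    blockDiagonal' (blk a c P p u) * blockDiagonal' (blk a c P q v) = 0 := by
  rw [← blockDiagonal'_mul, ← blockDiagonal'_zero]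
  congr 1
  funext d
  obtain ⟨d₁, g⟩ := p
  obtain ⟨d₂, g'⟩ := q
  by_cases e : d₁ = d₂
  · subst e
    refine (blk_mul a c P ⟨d₁, g⟩ u v g' d).trans ?_
    rcases h with h | h
    · have : (G d₁)ᶜ.Adj g g' := by
        rw [SimpleGraph.compl_adj]
        exact ⟨fun h' => h ⟨rfl, Or.inr h'⟩, fun h' => h ⟨rfl, Or.inl h'⟩⟩
      simp [h4 _ _ _ this]
    · have : star u ⬝ᵥ v = 0 := h rfl
      simp [this]
  · by_cases h1 : d = d₁
    · have h2 : d ≠ d₂ := fun h2 => e (h1.symm.trans h2)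
      simp [blk, h2]
    · simp [blk, h1]

end blk

theorem projRankCompl_sum_bound
    {r : ℕ} {V : Fin r → Type} [∀ d, Fintype (V d)] [∀ d, DecidableEq (V d)]
    (G : ∀ d, SimpleGraph (V d))
    {VH : Type} [Fintype VH] [DecidableEq VH] (H : SimpleGraph VH)
    (φ : VH → Σ d, V d) (u : ∀ h : VH, Fin ((φ h).1.1 + 1) → ℂ)
    (hunit : ∀ h, star (u h) ⬝ᵥ u h = 1)
    (horth : ∀ h h', h ≠ h' → ¬ H.Adj h h' →
      (¬ SimRel G (φ h) (φ h') ∨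
        ∀ e : (φ h).1 = (φ h').1,
          star (u h) ⬝ᵥ
            (fun i => u h' (Fin.cast (congrArg (fun d : Fin r => d.1 + 1) e) i)) = 0)) :
    projRank Hᶜ ≤ ∑ d : Fin r, ((d.1 + 1 : ℕ) : ℝ) * projRank (G d)ᶜ := by
  apply le_of_forall_pos_le_add
  intro ε hε
  set C : ℝ := ∑ d : Fin r, ((d.1 + 1 : ℕ) : ℝ) with hC
  have hC0 : 0 ≤ C := Finset.sum_nonneg fun d _ => by positivity
  set δ : ℝ := ε / (C + 1) with hδ
  have hδ0 : 0 < δ := by positivity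
  have hex := fun d => exists_rep (G d)ᶜ (projRank (G d)ᶜ + δ) (by linarith)
  choose a b P hb h1 h2 h3 h4 hlt using hex
  let c : Fin r → ℕ := fun d => ∏ i ∈ Finset.univ.erase d, b i
  have hc : ∀ d, b d * c d = ∏ i, b i := fun d => Finset.mul_prod_erase _ _ (Finset.mem_univ d)
  have hB : 0 < ∏ i, b i := Finset.prod_pos fun i _ => hb i
  have key := projRank_le Hᶜ (∏ i, b i) hB
    (fun h => blockDiagonal' (blk a c P (φ h) (u h)))
    (fun h => blk_star a c P h1 _ _) (fun h => blk_idem a c P h2 _ _ (hunit h))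
    (fun h => by
      rw [blk_trace a c P b h3 _ _ (hunit h), ← hc (φ h).1]
      push_cast; rfl)
    (fun h h' hh => by
      rw [SimpleGraph.compl_adj] at hh
      exact blk_orth a c P G h4 _ _ _ _ (horth h h' hh.1 hh.2))
  refine key.trans ?_
  have e1 : (Fintype.card (Σ d : Fin r, (Fin (d.1 + 1) × Fin (a d)) × Fin (c d)) : ℝ) /
      ((∏ i, b i : ℕ) : ℝ) = ∑ d : Fin r, ((d.1 + 1 : ℕ) : ℝ) * ((a d : ℝ) / b d) := by
    simp only [Fintype.card_sigma, Fintype.card_prod, Fintype.card_fin]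
    rw [Nat.cast_sum, Finset.sum_div]
    refine Finset.sum_congr rfl fun d _ => ?_
    have hbd : (b d : ℝ) ≠ 0 := by exact_mod_cast (hb d).ne'
    have hcd : (c d : ℝ) ≠ 0 := by
      have : b d * c d ≠ 0 := by rw [hc]; exact hB.ne'
      exact_mod_cast right_ne_zero_of_mul this
    rw [← hc d]
    push_cast
    field_simp
  rw [e1]
  calc _ ≤ ∑ d : Fin r, ((d.1 + 1 : ℕ) : ℝ) * (projRank (G d)ᶜ + δ) :=
        Finset.sum_le_sum fun d _ => mul_le_mul_of_nonneg_left (hlt d).le (by positivity)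
    _ = ∑ d : Fin r, ((d.1 + 1 : ℕ) : ℝ) * projRank (G d)ᶜ + C * δ := by
        simp only [mul_add, Finset.sum_add_distrib, hC, Finset.sum_mul]
    _ ≤ _ := by
        have : C * δ ≤ ε := by
          rw [hδ, mul_div_assoc', div_le_iff₀ (by positivity)]
          nlinarith
        linarith

end NCG
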